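/- Fix d ≥ 2 and a fraction p/q in lowest terms with q ≥ 2, 1 ≤ p ≤ q−1, gcd(p,q) = 1. For 1 ≤ k ≤ d−1, let N_k be the number of σ_d-rotational sets with rotation number kp/(kq) (equal to p/q after reduction) that are the union of exactly k distinct σ_d-orbits. Then N_1 = C(d−2+q, d−2), and for 2 ≤ k ≤ d−1, N_k = C(d−2+kq, d−2) − ∑_{j=1}^{k−1} C(k−1, j−1) · N_j. -/

import Mathlib

/-- The angle-multiplying map `σ_d : 𝕋 → 𝕋`, where the circle `𝕋 = ℝ/ℤ` is identified with
the set of representatives `[0,1) ⊆ ℝ` (and so ordered by comparing these representatives). -/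
noncomputable def sigmad (d : ℕ) (t : ℝ) : ℝ := Int.fract (d * t)

/-- The orbit of a point of the circle under `σ_d`. -/
def sigmaOrbit (d : ℕ) (t : ℝ) : Set ℝ := {s | ∃ k : ℕ, (sigmad d)^[k] t = s}

/-- `t : ZMod q → ℝ` lists (with indices viewed in `ℤ/qℤ`) the elements
`t 0 < t 1 < ⋯ < t (q-1)` of a `σ_d`-rotational set with rotation number `p/q`. -/
def IsRotational (d q : ℕ) (p : ZMod q) (t : ZMod q → ℝ) : Prop :=
  (∀ i, t i ∈ Set.Ico (0:ℝ) 1) ∧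
  (∀ i j : ZMod q, i.val < j.val → t i < t j) ∧
  p ≠ 0 ∧
  ∀ i, sigmad d (t i) = t (i + p)

/-- `N_k`: the number of `σ_d`-rotational sets with rotation number `kp/(kq)`
(equal to `p/q` after reduction) that are the union of exactly `k` distinct `σ_d`-orbits. -/
noncomputable def countRotSets (d q p k : ℕ) : ℕ :=
  Nat.card {A : Set ℝ //
    (∃ t : ZMod (k * q) → ℝ, Set.range t = A ∧
      IsRotational d (k * q) ((k * p : ℕ) : ZMod (k * q)) t) ∧
    {O : Set ℝ | ∃ x ∈ A, O = sigmaOrbit d x}.ncard = k}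

/-!
List a rotational set with `n = kq` elements as `t`, and let `s` be its rotation number. The
leading base-`d` digits `m i = ⌊d * t i⌋` satisfy `d * t i = m i + t (i + s)`, an invertible linear
system, so that they determine `t`. A sequence `m` arises in this way exactly when it is
nondecreasing with values below `d`, jumps at `-s` (where the cyclic order wraps around) and jumps
somewhere in every coset of `⟨s⟩`, that is, on every orbit.

Such an `m` is a multiset of `d - 1` breaks among `n + 1` places, with a forced break at `-s`. The
remaining `d - 2` breaks must meet each of the `k - 1` nonzero cosets, all of size `q`; the other
places number `q + 1`. By inclusion–exclusion there are `Δ_q^(k-1) f (q + 1)` choices, with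
`f x = x.multichoose (d - 2)`, and the recurrence is Newton's forward difference formula for `f`.
-/

section Covering
open Finset

theorem card_finset_sym {α : Type*} [DecidableEq α] (s : Finset α) (D : ℕ) :
    #(s.sym D) = (#s).multichoose D := by
  rw [← Fintype.card_coe s, ← Sym.card_sym_eq_multichoose, ← card_univ]
  symm
  refine card_nbij (Sym.map Subtype.val) ?_ (Sym.map_injective Subtype.val_injective D).injOn ?_
  · intro m _
    simp only [mem_coe, mem_sym_iff, Sym.mem_map]
    rintro _ ⟨a, -, rfl⟩
    exact a.2
  · intro m hm
    rw [mem_coe, mem_sym_iff] at hm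
    refine ⟨m.attach.map fun a => ⟨a.1, hm a.1 a.2⟩, mem_coe.2 (mem_univ _), ?_⟩
    rw [Sym.map_map]
    exact Sym.attach_map_coe m

variable {α ι : Type*} [Fintype α] [DecidableEq α] [DecidableEq ι] {q b : ℕ}

theorem card_sym_avoiding (f : α → ι) {S : Finset ι} (hq : ∀ c ∈ S, #{a | f a = c} = q)
    (hb : Fintype.card α = b + #S * q) (D : ℕ) :
    #{m : Sym α D | ∀ a ∈ m, f a ∉ S} = b.multichoose D := by
  have filter_eq : ({m : Sym α D | ∀ a ∈ m, f a ∉ S} : Finset _) =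
      ({a | f a ∉ S} : Finset α).sym D := by
    ext m
    simp only [mem_filter_univ, mem_sym_iff]
  have card_fibres : #{a | f a ∈ S} = #S * q := by
    rw [card_eq_sum_card_fiberwise (f := f) (t := S) fun a ha => by simpa using ha,
      ← smul_eq_mul, ← sum_const]
    refine sum_congr rfl fun c hc => ?_
    rw [← hq c hc, filter_filter]
    congr 1
    grind
  have card_split := card_filter_add_card_filter_not (s := (univ : Finset α)) (fun a => f a ∈ S)
  rw [card_univ, hb, card_fibres, add_comm b] at card_split
  rw [filter_eq, card_finset_sym, Nat.add_left_cancel card_split]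

theorem card_sym_covering (f : α → ι) {T : Finset ι} (hq : ∀ c ∈ T, #{a | f a = c} = q)
    (hb : Fintype.card α = b + #T * q) (D : ℕ) :
    (#{m : Sym α D | ∀ c ∈ T, ∃ a ∈ m, f a = c} : ℤ) =
      (fwdDiff q)^[#T] (fun x : ℕ => (x.multichoose D : ℤ)) b := by
  let avoiding (c : ι) : Finset (Sym α D) := {m | ∀ a ∈ m, f a ≠ c}
  have covering_eq : ({m : Sym α D | ∀ c ∈ T, ∃ a ∈ m, f a = c} : Finset _) =
      T.inf fun c => (avoiding c)ᶜ := by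
    ext m
    simp [avoiding, mem_inf]
  have card_avoiding (S : Finset ι) (hS : S ⊆ T) :
      #(S.inf avoiding) = (b + (#T - #S) * q).multichoose D := by
    have inf_eq : S.inf avoiding = ({m : Sym α D | ∀ a ∈ m, f a ∉ S} : Finset _) := by
      ext m
      simp only [avoiding, mem_inf, mem_filter_univ]
      exact ⟨fun h a ha haS => h _ haS a ha rfl, fun h c hc a ha hac => h a ha (hac ▸ hc)⟩
    rw [inf_eq]
    refine card_sym_avoiding f (fun c hc => hq c (hS hc)) ?_ D
    rw [hb, add_assoc, ← add_mul, Nat.sub_add_cancel (card_le_card hS)]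
  calc (#{m : Sym α D | ∀ c ∈ T, ∃ a ∈ m, f a = c} : ℤ)
      = ∑ S ∈ T.powerset, (-1) ^ #S * ((b + (#T - #S) * q).multichoose D : ℤ) := by
        rw [covering_eq, inclusion_exclusion_card_inf_compl]
        exact sum_congr rfl fun S hS => by rw [card_avoiding S (mem_powerset.1 hS)]
    _ = ∑ j ∈ range (#T + 1),
          (-1) ^ j * ((#T).choose j : ℤ) * ((b + (#T - j) * q).multichoose D : ℤ) := by
        rw [sum_powerset_apply_card
          fun j => (-1 : ℤ) ^ j * ((b + (#T - j) * q).multichoose D : ℤ)]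
        exact sum_congr rfl fun j _ => by rw [nsmul_eq_mul]; ring
    _ = (fwdDiff q)^[#T] (fun x : ℕ => (x.multichoose D : ℤ)) b := by
        rw [fwdDiff_iter_eq_sum_shift, ← sum_range_reflect]
        refine sum_congr rfl fun j hj => ?_
        have hj : j ≤ #T := mem_range_succ_iff.1 hj
        rw [show #T + 1 - 1 - j = #T - j by omega, Nat.choose_symm hj, Nat.sub_sub_self hj,
          smul_eq_mul, smul_eq_mul]

end Covering

section Cosets
open AddSubgroup Finset

variable {G : Type*} [AddGroup G]

theorem mk_zmultiples_eq_iff_exists_nsmul [Finite G] {s i j : G} :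
    (i : G ⧸ zmultiples s) = j ↔ ∃ l : ℕ, j = i + l • s := by
  rw [QuotientAddGroup.eq, ← mem_multiples_iff_mem_zmultiples, AddSubmonoid.mem_multiples_iff]
  exact exists_congr fun l => by rw [eq_neg_add_iff_add_eq, eq_comm]

theorem of_mk_zmultiples_eq [Finite G] {s : G} {P : G → Prop} (step : ∀ i, P i → P (i + s))
    {i j : G} (hij : (i : G ⧸ zmultiples s) = j) (hi : P i) : P j := by
  obtain ⟨l, rfl⟩ := mk_zmultiples_eq_iff_exists_nsmul.1 hij
  induction l with
  | zero => simpa using hi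
  | succ l ih =>
    rw [succ_nsmul, ← add_assoc]
    exact step _ (ih <| mk_zmultiples_eq_iff_exists_nsmul.2 ⟨l, rfl⟩)

theorem mk_neg_zmultiples (s : G) : ((-s : G) : G ⧸ zmultiples s) = (0 : G) := by
  rw [QuotientAddGroup.eq, neg_neg, add_zero]
  exact mem_zmultiples s

theorem card_mk_zmultiples_fibre [Fintype G] (s : G) [DecidableEq (G ⧸ zmultiples s)]
    (c : G ⧸ zmultiples s) : #{j : G | (j : G ⧸ zmultiples s) = c} = addOrderOf s := by
  rw [← Nat.card_zmultiples, ← Fintype.card_subtype, ← Nat.card_eq_fintype_card]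
  have e := QuotientAddGroup.preimageMkEquivAddSubgroupProdSet (zmultiples s) {c}
  rw [← mul_one (Nat.card (zmultiples s)), ← Nat.card_unique (α := ({c} : Set (G ⧸ zmultiples s))),
    ← Nat.card_prod]
  exact Nat.card_congr e

theorem card_quotient_zmultiples_mul_addOrderOf (s : G) :
    Nat.card (G ⧸ zmultiples s) * addOrderOf s = Nat.card G := by
  rw [← Nat.card_zmultiples, ← card_eq_card_quotient_mul_card_addSubgroup]

end Cosets

section ExpandingSystem

variable {ι : Type*} [Finite ι] {g : ι → ι} {c : ℝ} {t m : ι → ℝ}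

theorem nonneg_of_mul_eq_add_comp (hc : 1 < c) (ht : ∀ i, c * t i = m i + t (g i))
    (hm : ∀ i, 0 ≤ m i) (i : ι) : 0 ≤ t i := by
  have : Nonempty ι := ⟨i⟩
  obtain ⟨i₀, hmin⟩ := Finite.exists_min t
  have hi₀ : 0 ≤ (c - 1) * t i₀ := by linarith [ht i₀, hm i₀, hmin (g i₀)]
  exact (nonneg_of_mul_nonneg_right hi₀ (by linarith)).trans (hmin i)

theorem le_one_of_mul_eq_add_comp (hc : 1 < c) (ht : ∀ i, c * t i = m i + t (g i))
    (hm : ∀ i, m i ≤ c - 1) (i : ι) : t i ≤ 1 := by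
  have h := nonneg_of_mul_eq_add_comp (t := fun i => 1 - t i) (m := fun i => c - 1 - m i)
    (g := g) hc
    (fun i => by linear_combination -ht i) (fun i => by linarith [hm i]) i
  linarith

theorem eq_zero_of_mul_eq_comp (hc : 1 < c) (ht : ∀ i, c * t i = t (g i)) (i : ι) : t i = 0 := by
  refine le_antisymm ?_ ?_
  · have h := nonneg_of_mul_eq_add_comp (t := fun i => -t i) (m := 0) (g := g) hc
      (fun i => by simp [← ht]) (fun _ => le_rfl) i
    linarith
  · exact nonneg_of_mul_eq_add_comp (m := 0) (g := g) hc (fun i => by simp [ht]) (fun _ => le_rfl) i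

-- The linear map `t ↦ c • t - t ∘ g` is injective, hence surjective in finite dimension.
theorem exists_mul_eq_add_comp (hc : 1 < c) (g : ι → ι) (m : ι → ℝ) :
    ∃ t : ι → ℝ, ∀ i, c * t i = m i + t (g i) := by
  let L : (ι → ℝ) →ₗ[ℝ] ι → ℝ := c • LinearMap.id - LinearMap.funLeft ℝ ℝ g
  have hL (t : ι → ℝ) (i : ι) : L t i = c * t i - t (g i) := rfl
  have L_injective : Function.Injective L := by
    refine (injective_iff_map_eq_zero L).2 fun t ht => funext ?_
    exact eq_zero_of_mul_eq_comp hc fun i => sub_eq_zero.1 <| (hL t i).symm.trans (congrFun ht i)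
  obtain ⟨t, rfl⟩ := LinearMap.injective_iff_surjective.1 L_injective m
  exact ⟨t, fun i => by rw [hL]; ring⟩

end ExpandingSystem

section CyclicOrder

variable {n : ℕ} [NeZero n]

theorem zmod_val_sub_one_add_one {j : ZMod n} (hj : j ≠ 0) : (j - 1).val + 1 = j.val := by
  have hn : n ≠ 1 := by
    rintro rfl
    exact hj (Subsingleton.elim _ _)
  have hpos : 1 ≤ j.val := Nat.one_le_iff_ne_zero.2 ((ZMod.val_ne_zero j).2 hj)
  rw [ZMod.val_sub (by rwa [ZMod.val_one'' hn]), ZMod.val_one'' hn, Nat.sub_add_cancel hpos]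

theorem zmod_val_le_val_neg_one (i : ZMod n) : i.val ≤ (-1 : ZMod n).val := by
  obtain ⟨n, rfl⟩ := Nat.exists_eq_succ_of_ne_zero (NeZero.ne n)
  rw [ZMod.val_neg_one]
  exact Nat.lt_succ_iff.1 (ZMod.val_lt i)

theorem zmod_induction {P : ZMod n → Prop} (zero : P 0) (step : ∀ j ≠ 0, P (j - 1) → P j)
    (j : ZMod n) : P j := by
  induction hv : j.val generalizing j with
  | zero => rwa [(ZMod.val_eq_zero j).1 hv]
  | succ v ih =>
    have hj : j ≠ 0 := by
      rintro rfl
      simp at hv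
    exact step j hj (ih _ (by have := zmod_val_sub_one_add_one hj; omega))

theorem lt_of_val_lt_of_sub_one_lt {t : ZMod n → ℝ} (ht : ∀ j ≠ 0, t (j - 1) < t j)
    {i j : ZMod n} (hij : i.val < j.val) : t i < t j := by
  induction j using zmod_induction with
  | zero => simp at hij
  | step j hj ih =>
    have hval := zmod_val_sub_one_add_one hj
    obtain h | h : i.val < (j - 1).val ∨ i.val = (j - 1).val := by omega
    · exact (ih h).trans (ht j hj)
    · rw [ZMod.val_injective n h]
      exact ht j hj

end CyclicOrder

/-- `m` is an admissible sequence of leading base-`d` digits for the points of a `σ_d`-rotational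
set with rotation number `s`. The sequence jumps at `j` when `m (j - 1) < m j`; the wraparound step
from `-1` to `0` is a decrease and never counts as a jump. The points with index in a given coset
of `⟨s⟩` form an orbit. -/
structure IsDigitSeq (d : ℕ) {n : ℕ} (s : ZMod n) (m : ZMod n → ℕ) : Prop where
  lt : ∀ i, m i < d
  mono : ∀ i j : ZMod n, i.val ≤ j.val → m i ≤ m j
  jump_neg : m (-s - 1) < m (-s)
  jump_coset : ∀ c : ZMod n ⧸ AddSubgroup.zmultiples s, ∃ j : ZMod n, ↑j = c ∧ m (j - 1) < m j

section Digits
open AddSubgroup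

variable {d n : ℕ} {s : ZMod n} {t : ZMod n → ℝ}

namespace IsRotational

theorem mul_eq_floor_add (ht : IsRotational d n s t) (i : ZMod n) :
    d * t i = (⌊d * t i⌋₊ : ℝ) + t (i + s) := by
  have hnonneg : 0 ≤ d * t i := mul_nonneg d.cast_nonneg (ht.1 i).1
  rw [← ht.2.2.2 i, sigmad, natCast_floor_eq_intCast_floor hnonneg, Int.floor_add_fract]

theorem injective [NeZero n] (ht : IsRotational d n s t) : Function.Injective t := by
  intro i j hij
  refine ZMod.val_injective n ?_
  by_contra h
  rcases Nat.lt_or_gt_of_ne h with h | h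
  · exact (ht.2.1 i j h).ne hij
  · exact (ht.2.1 j i h).ne' hij

theorem le_of_val_le [NeZero n] (ht : IsRotational d n s t) {i j : ZMod n} (hij : i.val ≤ j.val) :
    t i ≤ t j := by
  rcases hij.eq_or_lt with h | h
  · rw [ZMod.val_injective n h]
  · exact (ht.2.1 i j h).le

theorem sub_one_lt [NeZero n] (ht : IsRotational d n s t) {j : ZMod n} (hj : j ≠ 0) :
    t (j - 1) < t j :=
  ht.2.1 _ _ (by have := zmod_val_sub_one_add_one hj; omega)

theorem eq_of_range_eq [NeZero n] {t' : ZMod n → ℝ} (ht : IsRotational d n s t)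
    (ht' : IsRotational d n s t') (h : Set.range t = Set.range t') : t = t' := by
  obtain ⟨n, rfl⟩ := Nat.exists_eq_succ_of_ne_zero (NeZero.ne n)
  have hmono : StrictMono fun i : Fin (n + 1) => t i := fun i j => ht.2.1 i j
  have hmono' : StrictMono fun i : Fin (n + 1) => t' i := fun i j => ht'.2.1 i j
  exact (hmono.range_inj hmono').1 h

theorem sigmaOrbit_eq_image_coset [NeZero n] (ht : IsRotational d n s t) (i : ZMod n) :
    sigmaOrbit d (t i) = t '' {j | (j : ZMod n ⧸ zmultiples s) = i} := by
  have iterate_eq (l : ℕ) : (sigmad d)^[l] (t i) = t (i + l • s) := by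
    induction l with
    | zero => simp
    | succ l ih => rw [Function.iterate_succ_apply', ih, ht.2.2.2, succ_nsmul, add_assoc]
  ext x
  simp only [sigmaOrbit, iterate_eq, Set.mem_ofPred_eq, Set.mem_image,
    eq_comm (b := (i : ZMod n ⧸ zmultiples s)), mk_zmultiples_eq_iff_exists_nsmul]
  grind

theorem ncard_orbits [NeZero n] (ht : IsRotational d n s t) :
    {O : Set ℝ | ∃ x ∈ Set.range t, O = sigmaOrbit d x}.ncard =
      Nat.card (ZMod n ⧸ zmultiples s) := by
  let orbit (c : ZMod n ⧸ zmultiples s) : Set ℝ := t '' {j | ↑j = c}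
  have orbit_injective : Function.Injective orbit := by
    intro c c' h
    obtain ⟨j, rfl⟩ := QuotientAddGroup.mk_surjective c
    have hj : j ∈ {j : ZMod n | (j : ZMod n ⧸ zmultiples s) = c'} :=
      ht.injective.image_injective h ▸ rfl
    exact hj
  rw [← Set.ncard_range_of_injective orbit_injective,
    ← QuotientAddGroup.mk_surjective.range_comp orbit]
  congr 1
  ext O
  simp [orbit, ht.sigmaOrbit_eq_image_coset, eq_comm]

theorem floor_sub_one_lt [NeZero n] (hd : 0 < d) (ht : IsRotational d n s t) {j : ZMod n}
    (hj : j ≠ 0) (hjs : t (j + s) ≤ t (j - 1 + s)) : ⌊d * t (j - 1)⌋₊ < ⌊d * t j⌋₊ := by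
  have hlt : d * t (j - 1) < d * t j :=
    mul_lt_mul_of_pos_left (ht.sub_one_lt hj) (Nat.cast_pos.2 hd)
  rw [ht.mul_eq_floor_add, ht.mul_eq_floor_add j] at hlt
  exact_mod_cast (by linarith : (⌊d * t (j - 1)⌋₊ : ℝ) < ⌊d * t j⌋₊)

theorem floor_neg_sub_one_lt [NeZero n] (hd : 0 < d) (ht : IsRotational d n s t) :
    ⌊d * t (-s - 1)⌋₊ < ⌊d * t (-s)⌋₊ := by
  refine ht.floor_sub_one_lt hd (neg_ne_zero.2 ht.2.2.1) (ht.le_of_val_le ?_)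
  simp

-- Along a coset without jumps the positive gaps `t j - t (j - 1)` would grow by a factor `d` at
-- each step, which is impossible on a finite set.
theorem exists_floor_sub_one_lt [NeZero n] (hd : 2 ≤ d) (ht : IsRotational d n s t)
    (c : ZMod n ⧸ zmultiples s) :
    ∃ j : ZMod n, ↑j = c ∧ ⌊d * t (j - 1)⌋₊ < ⌊d * t j⌋₊ := by
  by_contra! no_jump
  have ne_zero (j : ZMod n) (hj : (j : ZMod n ⧸ zmultiples s) = c) : j ≠ 0 := by
    rintro rfl
    have hle := no_jump (-s) ((mk_neg_zmultiples s).trans hj)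
    exact hle.not_gt (ht.floor_neg_sub_one_lt (by omega))
  have gap_expands (j : ZMod n) (hj : (j : ZMod n ⧸ zmultiples s) = c) :
      d * (t j - t (j - 1)) = t (j + s) - t (j + s - 1) := by
    have hfloor : ⌊d * t j⌋₊ = ⌊d * t (j - 1)⌋₊ :=
      (no_jump j hj).antisymm <| Nat.floor_mono <|
        mul_le_mul_of_nonneg_left (ht.sub_one_lt (ne_zero j hj)).le d.cast_nonneg
    rw [mul_sub, ht.mul_eq_floor_add, ht.mul_eq_floor_add (j - 1), hfloor, sub_add_eq_add_sub]
    ring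
  have mk_add (j : ZMod n) : ((j + s : ZMod n) : ZMod n ⧸ zmultiples s) = j :=
    QuotientAddGroup.mk_add_of_mem j (mem_zmultiples s)
  obtain ⟨j, hj⟩ := QuotientAddGroup.mk_surjective c
  have gap_eq_zero := eq_zero_of_mul_eq_comp
    (ι := {j : ZMod n // (j : ZMod n ⧸ zmultiples s) = c}) (t := fun j => t j - t (j - 1))
    (g := fun j => ⟨j + s, (mk_add j).trans j.2⟩) (Nat.one_lt_cast.2 hd)
    (fun j => gap_expands j j.2) ⟨j, hj⟩
  exact (ht.sub_one_lt (ne_zero j hj)).ne' (sub_eq_zero.1 gap_eq_zero)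

theorem isDigitSeq_floor [NeZero n] (hd : 2 ≤ d) (ht : IsRotational d n s t) :
    IsDigitSeq d s fun i => ⌊d * t i⌋₊ where
  lt i := by
    have hd₀ : (0 : ℝ) < d := by positivity
    rw [Nat.floor_lt (mul_nonneg hd₀.le (ht.1 i).1)]
    exact mul_lt_of_lt_one_right hd₀ (ht.1 i).2
  mono i j hij := Nat.floor_mono (mul_le_mul_of_nonneg_left (ht.le_of_val_le hij) d.cast_nonneg)
  jump_neg := ht.floor_neg_sub_one_lt (by omega)
  jump_coset := ht.exists_floor_sub_one_lt hd

theorem eq_of_floor_eq [NeZero n] {t' : ZMod n → ℝ} (hd : 2 ≤ d) (ht : IsRotational d n s t)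
    (ht' : IsRotational d n s t') (h : ∀ i, ⌊d * t i⌋₊ = ⌊d * t' i⌋₊) : t = t' := by
  have hsub := eq_zero_of_mul_eq_comp (t := t - t') (g := (· + s)) (Nat.one_lt_cast.2 hd)
    fun i => by
      simp only [Pi.sub_apply]
      linear_combination ht.mul_eq_floor_add i - ht'.mul_eq_floor_add i +
        congrArg (Nat.cast (R := ℝ)) (h i)
  exact sub_eq_zero.1 (funext hsub)

end IsRotational

namespace IsDigitSeq

variable [NeZero n] {m : ZMod n → ℕ}

theorem lt_one (hm : IsDigitSeq d s m) (ht : ∀ i, d * t i = m i + t (i + s))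
    (hle : ∀ i, t i ≤ 1) (i : ZMod n) : t i < 1 := by
  have digit_le (i : ZMod n) : (m i : ℝ) + 1 ≤ d := by exact_mod_cast hm.lt i
  refine lt_of_le_of_ne (hle i) fun hi => ?_
  have step (j : ZMod n) (hj : t j = 1) : t (j + s) = 1 := by
    have := ht j
    rw [hj] at this
    linarith [hle (j + s), digit_le j]
  obtain ⟨j, hj, hjump⟩ := hm.jump_coset (i + 1 : ZMod n)
  have hmk : (i : ZMod n ⧸ zmultiples s) = (j - 1 : ZMod n) := by
    rw [QuotientAddGroup.mk_sub, hj, QuotientAddGroup.mk_add, add_sub_cancel_right]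
  have htop : t (j - 1) = 1 := of_mk_zmultiples_eq step hmk hi
  have hcast : (m (j - 1) : ℝ) + 1 ≤ m j := by exact_mod_cast hjump
  have := ht (j - 1)
  rw [htop] at this
  linarith [hle (j - 1 + s), digit_le j]

-- A gap that fails to be positive stays so along its whole coset, which then has no jump.
theorem sub_one_lt (hm : IsDigitSeq d s m) (ht : ∀ i, d * t i = m i + t (i + s))
    (hmem : ∀ i, t i ∈ Set.Ico 0 1) {j : ZMod n} (hj : j ≠ 0) : t (j - 1) < t j := by
  by_contra! hle
  have no_jump (i : ZMod n) (hi : t i ≤ t (i - 1)) : ¬ m (i - 1) < m i := by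
    intro hjump
    have hcast : (m (i - 1) : ℝ) + 1 ≤ m i := by exact_mod_cast hjump
    have hmul : d * t i ≤ d * t (i - 1) := mul_le_mul_of_nonneg_left hi d.cast_nonneg
    linarith [ht i, ht (i - 1), (hmem (i + s)).1, (hmem (i - 1 + s)).2]
  have step (i : ZMod n) (hi : i ≠ 0 ∧ t i ≤ t (i - 1)) :
      i + s ≠ 0 ∧ t (i + s) ≤ t (i + s - 1) := by
    refine ⟨fun h => no_jump i hi.2 ?_, ?_⟩
    · rw [eq_neg_of_add_eq_zero_left h]
      exact hm.jump_neg
    · have hval := zmod_val_sub_one_add_one hi.1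
      have hcast : (m (i - 1) : ℝ) ≤ m i := by exact_mod_cast hm.mono _ _ (by omega)
      have hmul : d * t i ≤ d * t (i - 1) := mul_le_mul_of_nonneg_left hi.2 d.cast_nonneg
      rw [add_sub_right_comm]
      linarith [ht i, ht (i - 1)]
  obtain ⟨i, hi, hjump⟩ := hm.jump_coset j
  exact no_jump i (of_mk_zmultiples_eq step hi.symm ⟨hj, hle⟩).2 hjump

theorem exists_isRotational (hd : 2 ≤ d) (hs : s ≠ 0) (hm : IsDigitSeq d s m) :
    ∃ t, IsRotational d n s t ∧ ∀ i, ⌊d * t i⌋₊ = m i := by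
  have hd₁ : (1 : ℝ) < d := Nat.one_lt_cast.2 hd
  obtain ⟨t, ht⟩ := exists_mul_eq_add_comp hd₁ (· + s) fun i => (m i : ℝ)
  have nonneg := nonneg_of_mul_eq_add_comp hd₁ ht fun i => (m i).cast_nonneg
  have digit_le (i : ZMod n) : (m i : ℝ) ≤ d - 1 :=
    le_sub_iff_add_le.2 (by exact_mod_cast hm.lt i)
  have hmem (i : ZMod n) : t i ∈ Set.Ico 0 1 :=
    ⟨nonneg i, hm.lt_one ht (le_one_of_mul_eq_add_comp hd₁ ht digit_le) i⟩
  refine ⟨t, ⟨hmem, fun i j => ?_, hs, fun i => ?_⟩, fun i => ?_⟩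
  · exact lt_of_val_lt_of_sub_one_lt fun j => hm.sub_one_lt ht hmem
  · rw [sigmad, ht, Int.fract_natCast_add, Int.fract_eq_self.2 (hmem _)]
  · rw [ht, add_comm, Nat.floor_add_natCast (hmem _).1, Nat.floor_eq_zero.2 (hmem _).2, zero_add]

end IsDigitSeq

theorem bijOn_floor [NeZero n] (hd : 2 ≤ d) (hs : s ≠ 0) :
    Set.BijOn (fun (t : ZMod n → ℝ) i => ⌊d * t i⌋₊) {t | IsRotational d n s t}
      {m | IsDigitSeq d s m} := by
  refine ⟨fun t ht => ht.isDigitSeq_floor hd, fun t ht t' ht' h => ?_, fun m hm => ?_⟩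
  · exact ht.eq_of_floor_eq hd ht' (congrFun h)
  · obtain ⟨t, ht, hfloor⟩ := hm.exists_isRotational hd hs
    exact ⟨t, ht, funext hfloor⟩

end Digits

section Breaks
open AddSubgroup

variable {n : ℕ} [NeZero n] {μ μ' : Multiset (Option (ZMod n))} {m : ZMod n → ℕ} {s : ZMod n}

/-- The sequence whose value at `i` is the number of breaks of `μ` at or before `i`. A break is a
place where the count increases by one: `some j` is the place between the indices `j - 1` and `j`
(before all indices if `j = 0`), and `none` is the place after the last index. For the leading
base-`d` digits of a rotational set, the breaks are the positions of `1/d, …, (d-1)/d` among the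
points. -/
def breakDigits (μ : Multiset (Option (ZMod n))) (i : ZMod n) : ℕ :=
  ∑ j with j.val ≤ i.val, μ.count (some j)

theorem filter_val_le_eq_insert {j : ZMod n} (hj : j ≠ 0) :
    Finset.univ.filter (fun i : ZMod n => i.val ≤ j.val) =
      insert j (Finset.univ.filter fun i => i.val ≤ (j - 1).val) := by
  ext i
  have hval := zmod_val_sub_one_add_one hj
  simp only [Finset.mem_filter_univ, Finset.mem_insert, ← (ZMod.val_injective n).eq_iff]
  omega

theorem breakDigits_zero (μ : Multiset (Option (ZMod n))) :
    breakDigits μ 0 = μ.count (some 0) := by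
  simp [breakDigits, Finset.filter_eq']

theorem breakDigits_eq_sub_one_add {j : ZMod n} (hj : j ≠ 0) :
    breakDigits μ j = breakDigits μ (j - 1) + μ.count (some j) := by
  have hval := zmod_val_sub_one_add_one hj
  rw [breakDigits, filter_val_le_eq_insert hj, Finset.sum_insert, add_comm, breakDigits]
  simp only [Finset.mem_filter_univ]
  omega

theorem breakDigits_neg_one_add (μ : Multiset (Option (ZMod n))) :
    breakDigits μ (-1) + μ.count none = μ.card := by
  rw [← Multiset.sum_count_eq_card (s := Finset.univ) fun a _ => Finset.mem_univ a,
    Fintype.sum_option, add_comm, breakDigits,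
    Finset.filter_true_of_mem fun i _ => zmod_val_le_val_neg_one i]

theorem breakDigits_mono {i j : ZMod n} (hij : i.val ≤ j.val) :
    breakDigits μ i ≤ breakDigits μ j :=
  Finset.sum_le_sum_of_subset fun k => by
    simp only [Finset.mem_filter_univ]
    exact fun hk => hk.trans hij

theorem breakDigits_le_card (i : ZMod n) : breakDigits μ i ≤ μ.card :=
  (breakDigits_mono (zmod_val_le_val_neg_one i)).trans <|
    (Nat.le_add_right _ _).trans (breakDigits_neg_one_add μ).le

theorem breakDigits_sub_one_lt_iff {j : ZMod n} :
    breakDigits μ (j - 1) < breakDigits μ j ↔ j ≠ 0 ∧ some j ∈ μ := by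
  rcases eq_or_ne j 0 with rfl | hj
  · simpa using breakDigits_mono (by simp)
  · rw [breakDigits_eq_sub_one_add hj, Nat.lt_add_right_iff_pos, Multiset.count_pos]
    exact (and_iff_right hj).symm

theorem eq_of_breakDigits_eq (hcard : μ.card = μ'.card) (h : breakDigits μ = breakDigits μ') :
    μ = μ' := by
  refine Multiset.ext.2 ?_
  rintro (_ | j)
  · have hμ := breakDigits_neg_one_add μ
    rw [hcard, h, ← breakDigits_neg_one_add μ'] at hμ
    exact Nat.add_left_cancel hμ
  · rcases eq_or_ne j 0 with rfl | hj
    · rw [← breakDigits_zero, h, breakDigits_zero]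
    · have hμ := breakDigits_eq_sub_one_add (μ := μ) hj
      rw [h, breakDigits_eq_sub_one_add hj] at hμ
      exact (Nat.add_left_cancel hμ).symm

theorem exists_breakDigits_eq {N : ℕ} (hmono : ∀ i j : ZMod n, i.val ≤ j.val → m i ≤ m j)
    (hle : ∀ i, m i ≤ N) :
    ∃ μ : Multiset (Option (ZMod n)), μ.card = N ∧ breakDigits μ = m := by
  let gap : Option (ZMod n) → ℕ
    | none => N - m (-1)
    | some j => if j = 0 then m 0 else m j - m (j - 1)
  let μ := Finsupp.toMultiset (Finsupp.equivFunOnFinite.symm gap)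
  have count_eq (a : Option (ZMod n)) : μ.count a = gap a := Finsupp.count_toMultiset _ a
  have digits_eq : breakDigits μ = m := by
    funext j
    induction j using zmod_induction with
    | zero => simp [breakDigits_zero, count_eq, gap]
    | step j hj ih =>
      have hval := zmod_val_sub_one_add_one hj
      rw [breakDigits_eq_sub_one_add hj, ih, count_eq]
      simpa only [gap, if_neg hj] using Nat.add_sub_cancel' (hmono _ _ (by omega))
  refine ⟨μ, ?_, digits_eq⟩
  rw [← breakDigits_neg_one_add, digits_eq, count_eq]
  exact Nat.add_sub_cancel' (hle _)

theorem isDigitSeq_breakDigits_iff (hs : s ≠ 0) :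
    IsDigitSeq (μ.card + 1) s (breakDigits μ) ↔ some (-s) ∈ μ ∧
      ∀ c : ZMod n ⧸ zmultiples s, c ≠ 0 → ∃ j : ZMod n, ↑j = c ∧ some j ∈ μ := by
  constructor
  · intro h
    refine ⟨(breakDigits_sub_one_lt_iff.1 h.jump_neg).2, fun c _ => ?_⟩
    obtain ⟨j, hj, hjump⟩ := h.jump_coset c
    exact ⟨j, hj, (breakDigits_sub_one_lt_iff.1 hjump).2⟩
  · rintro ⟨hneg, hcover⟩
    have jump_neg := breakDigits_sub_one_lt_iff.2 ⟨neg_ne_zero.2 hs, hneg⟩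
    refine ⟨fun i => Nat.lt_succ_of_le (breakDigits_le_card i), fun i j => breakDigits_mono,
      jump_neg, fun c => ?_⟩
    rcases eq_or_ne c 0 with rfl | hc
    · exact ⟨-s, mk_neg_zmultiples s, jump_neg⟩
    · obtain ⟨j, rfl, hj⟩ := hcover c hc
      refine ⟨j, rfl, breakDigits_sub_one_lt_iff.2 ⟨?_, hj⟩⟩
      rintro rfl
      exact hc (QuotientAddGroup.mk_zero _)

theorem bijOn_breakDigits_cons {d : ℕ} (hd : 2 ≤ d) (hs : s ≠ 0) :
    Set.BijOn
      (fun ν : Sym (Option (ZMod n)) (d - 2) => breakDigits (some (-s) ::ₘ (ν : Multiset _)))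
      {ν | ∀ c : ZMod n ⧸ zmultiples s, c ≠ 0 → ∃ j : ZMod n, ↑j = c ∧ some j ∈ ν}
      {m | IsDigitSeq d s m} := by
  have card_cons (ν : Sym (Option (ZMod n)) (d - 2)) :
      (some (-s) ::ₘ (ν : Multiset (Option (ZMod n)))).card + 1 = d := by
    rw [Multiset.card_cons, Sym.card_coe]
    omega
  refine ⟨fun ν hν => ?_, fun ν _ ν' _ h => ?_, fun m hm => ?_⟩
  · have h := (isDigitSeq_breakDigits_iff (μ := some (-s) ::ₘ (ν : Multiset _)) hs).2
      ⟨Multiset.mem_cons_self _ _, fun c hc => (hν c hc).imp fun j => And.imp_right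
        Multiset.mem_cons_of_mem⟩
    rwa [card_cons] at h
  · refine Sym.coe_injective ((Multiset.cons_inj_right _).1 (eq_of_breakDigits_eq ?_ h))
    exact Nat.succ_injective ((card_cons ν).trans (card_cons ν').symm)
  · obtain ⟨μ, hcard, rfl⟩ := exists_breakDigits_eq hm.mono fun i => Nat.le_pred_of_lt (hm.lt i)
    obtain rfl : μ.card + 1 = d := by rw [hcard, Nat.pred_eq_sub_one]; omega
    obtain ⟨hneg, hcover⟩ := (isDigitSeq_breakDigits_iff hs).1 hm
    obtain ⟨ν, rfl⟩ := Multiset.exists_cons_of_mem hneg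
    refine ⟨⟨ν, by simp⟩, fun c hc => ?_, rfl⟩
    obtain ⟨j, rfl, hj⟩ := hcover c hc
    refine ⟨j, rfl, (Multiset.mem_cons.1 hj).resolve_left ?_⟩
    rintro ⟨rfl⟩
    exact hc (mk_neg_zmultiples s)

end Breaks

section Counting
open AddSubgroup

variable {d n : ℕ} [NeZero n] {s : ZMod n}

theorem ncard_sym_covering_cosets (s : ZMod n) (D : ℕ) :
    (Set.ncard {ν : Sym (Option (ZMod n)) D | ∀ c : ZMod n ⧸ zmultiples s, c ≠ 0 →
        ∃ j : ZMod n, ↑j = c ∧ some j ∈ ν} : ℤ) =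
      (fwdDiff (addOrderOf s))^[Nat.card (ZMod n ⧸ zmultiples s) - 1]
        (fun x : ℕ => (x.multichoose D : ℤ)) (addOrderOf s + 1) := by
  classical
  let colour : Option (ZMod n) → ZMod n ⧸ zmultiples s := fun a => a.elim 0 (↑)
  let T : Finset (ZMod n ⧸ zmultiples s) := Finset.univ.erase 0
  have card_T : T.card = Nat.card (ZMod n ⧸ zmultiples s) - 1 := by
    rw [Finset.card_erase_of_mem (Finset.mem_univ _), Finset.card_univ, Nat.card_eq_fintype_card]
  have card_fibre (c) (hc : c ∈ T) :
      Finset.card {a : Option (ZMod n) | colour a = c} = addOrderOf s := by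
    refine .trans (congrArg Finset.card (Finset.ext ?_)) <|
      (Finset.card_map Function.Embedding.some).trans (card_mk_zmultiples_fibre s c)
    rintro (_ | j) <;> simp [colour, (Finset.ne_of_mem_erase hc).symm]
  have card_option : Fintype.card (Option (ZMod n)) = addOrderOf s + 1 + T.card * addOrderOf s := by
    have hmul := card_quotient_zmultiples_mul_addOrderOf s
    have hpos : 0 < Nat.card (ZMod n ⧸ zmultiples s) := Nat.card_pos
    rw [Fintype.card_option, ← Nat.card_eq_fintype_card, ← hmul, card_T, Nat.sub_mul, one_mul]
    have := Nat.le_mul_of_pos_left (addOrderOf s) hpos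
    omega
  rw [← card_T, ← card_sym_covering colour card_fibre card_option, ← Set.ncard_coe_finset]
  have mem_iff (ν : Sym (Option (ZMod n)) D) (c) (hc : c ≠ 0) :
      (∃ a ∈ ν, colour a = c) ↔ ∃ j : ZMod n, ↑j = c ∧ some j ∈ ν := by
    simp [Option.exists, colour, hc.symm, and_comm]
  simp +contextual [T, mem_iff, Finset.coe_filter]

theorem ncard_isRotational (hd : 2 ≤ d) (hs : s ≠ 0) :
    ({t | IsRotational d n s t}.ncard : ℤ) =
      (fwdDiff (addOrderOf s))^[Nat.card (ZMod n ⧸ zmultiples s) - 1]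
        (fun x : ℕ => (x.multichoose (d - 2) : ℤ)) (addOrderOf s + 1) := by
  rw [(bijOn_floor hd hs).ncard_eq, ← (bijOn_breakDigits_cons hd hs).ncard_eq,
    ncard_sym_covering_cosets]

theorem card_rotationalSets_eq_ncard (d : ℕ) (s : ZMod n) :
    Nat.card {A : Set ℝ // (∃ t : ZMod n → ℝ, Set.range t = A ∧ IsRotational d n s t) ∧
      {O : Set ℝ | ∃ x ∈ A, O = sigmaOrbit d x}.ncard = Nat.card (ZMod n ⧸ zmultiples s)} =
      {t | IsRotational d n s t}.ncard := by
  have range_injOn : Set.InjOn Set.range {t | IsRotational d n s t} :=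
    fun t ht t' ht' h => ht.eq_of_range_eq ht' h
  rw [← range_injOn.ncard_image, ← Nat.card_coe_set_eq]
  refine Nat.card_congr (Equiv.subtypeEquivRight fun A => ⟨?_, ?_⟩)
  · rintro ⟨⟨t, rfl, ht⟩, -⟩
    exact ⟨t, ht, rfl⟩
  · rintro ⟨t, ht, rfl⟩
    exact ⟨⟨t, rfl, ht⟩, ht.ncard_orbits⟩

end Counting

theorem countRotSets_eq_fwdDiff_iter {d q p k : ℕ} (hd : 2 ≤ d) (hq : 2 ≤ q)
    (hpq : p.Coprime q) (hk : 1 ≤ k) :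
    (countRotSets d q p k : ℤ) =
      (fwdDiff q)^[k - 1] (fun x : ℕ => (x.multichoose (d - 2) : ℤ)) (q + 1) := by
  have : NeZero (k * q) := ⟨by positivity⟩
  have order_eq : addOrderOf ((k * p : ℕ) : ZMod (k * q)) = q := by
    rw [ZMod.addOrderOf_coe _ (NeZero.ne _), Nat.gcd_mul_left, hpq.symm.gcd_eq_one, mul_one,
      Nat.mul_div_cancel_left _ hk]
  have ne_zero : ((k * p : ℕ) : ZMod (k * q)) ≠ 0 := by
    rw [Ne, ← AddMonoid.addOrderOf_eq_one_iff, order_eq]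
    omega
  have card_quotient :
      Nat.card (ZMod (k * q) ⧸ AddSubgroup.zmultiples ((k * p : ℕ) : ZMod (k * q))) = k := by
    have h := card_quotient_zmultiples_mul_addOrderOf ((k * p : ℕ) : ZMod (k * q))
    rw [order_eq, Nat.card_zmod] at h
    exact Nat.eq_of_mul_eq_mul_right (by omega) h
  have h := ncard_isRotational hd ne_zero
  rw [← card_rotationalSets_eq_ncard, order_eq, card_quotient] at h
  exact h

theorem stmt13_general {d q p k : ℕ} (hd : 2 ≤ d) (hq : 2 ≤ q) (hpq : p.Coprime q) (hk : 1 ≤ k) :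
    (countRotSets d q p k : ℤ) =
      ((d - 2 + k * q).choose (d - 2) : ℤ) -
        ∑ j ∈ Finset.Icc 1 (k - 1),
          ((k - 1).choose (j - 1) : ℤ) * countRotSets d q p j := by
  obtain ⟨r, rfl⟩ := Nat.exists_eq_add_of_le' hk
  have newton :=
    shift_eq_sum_fwdDiff_iter q (fun x : ℕ => (x.multichoose (d - 2) : ℤ)) r (q + 1)
  have diff_eq (j : ℕ) :
      (fwdDiff q)^[j] (fun x : ℕ => (x.multichoose (d - 2) : ℤ)) (q + 1) =
        countRotSets d q p (j + 1) :=
    (countRotSets_eq_fwdDiff_iter hd hq hpq (Nat.le_add_left 1 j)).symm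
  have arg_eq : q + 1 + r * q + (d - 2) - 1 = d - 2 + (r + 1) * q := by
    rw [add_one_mul]
    omega
  simp only [diff_eq] at newton
  rw [Finset.sum_range_succ, Nat.choose_self, one_nsmul, smul_eq_mul, Nat.multichoose_eq,
    arg_eq] at newton
  rw [newton, Nat.add_sub_cancel, ← Finset.Ico_succ_right_eq_Icc, Finset.sum_Ico_eq_sum_range]
  simp [add_comm 1]

theorem stmt13 (d q p : ℕ) (hd : 2 ≤ d) (hq : 2 ≤ q)
    (hp1 : 1 ≤ p) (hp2 : p ≤ q - 1) (hpq : Nat.gcd p q = 1) :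
    countRotSets d q p 1 = (d - 2 + q).choose (d - 2) ∧
    ∀ k : ℕ, 2 ≤ k → k ≤ d - 1 →
      (countRotSets d q p k : ℤ) =
        ((d - 2 + k * q).choose (d - 2) : ℤ) -
          ∑ j ∈ Finset.Icc 1 (k - 1),
            ((k - 1).choose (j - 1) : ℤ) * countRotSets d q p j := by
  refine ⟨?_, fun k hk _ => stmt13_general hd hq hpq (by omega)⟩
  exact Nat.cast_injective (R := ℤ) (by simpa using stmt13_general hd hq hpq le_rfl)
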